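/- The process X = 2K − B does not have the law of the BES(5) process: there exist m ∈ ℕ and times 0 < t₁ < ⋯ < t_m such that the law of the random vector (X(t₁), …, X(t_m)) differs from the law of (‖W(t₁)‖, …, ‖W(t_m)‖), where W is a standard 5-dimensional Brownian motion started at the origin. -/

import Mathlib

open MeasureTheory ProbabilityTheory Set Filter Topology
open scoped Classical

noncomputable section

/-- The σ-algebra generated by a process `Y` up to time `t` (over times in `[0, t]`),
i.e. `σ(Y u : 0 ≤ u ≤ t)`. -/
def natSigma {Ω E : Type*} [MeasurableSpace E] (Y : ℝ → Ω → E) (t : ℝ) :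
    MeasurableSpace Ω :=
  ⨆ u : Set.Icc (0 : ℝ) t, MeasurableSpace.comap (Y u) inferInstance

/-- The σ-algebra generated by the whole (nonnegative-time) process `Y`. -/
def procSigma {Ω E : Type*} [MeasurableSpace E] (Y : ℝ → Ω → E) :
    MeasurableSpace Ω :=
  ⨆ u : Set.Ici (0 : ℝ), MeasurableSpace.comap (Y u) inferInstance

/-- `B` is a standard one-dimensional Brownian motion (with `B 0 = 0`) under `P`:
measurable, a.s. starting at `0` and continuous on `[0, ∞)`, with Gaussian increments
`B t - B s ~ N(0, t - s)` that are independent of the past. -/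
structure IsBrownianMotion {Ω : Type*} [MeasurableSpace Ω] (P : Measure Ω)
    (B : ℝ → Ω → ℝ) : Prop where
  measurable : ∀ t : ℝ, Measurable (B t)
  init : ∀ᵐ ω ∂P, B 0 ω = 0
  cont : ∀ᵐ ω ∂P, ContinuousOn (fun t => B t ω) (Set.Ici 0)
  incr_law : ∀ s t : ℝ, 0 ≤ s → s ≤ t →
    P.map (fun ω => B t ω - B s ω) = gaussianReal 0 (Real.toNNReal (t - s))
  incr_indep : ∀ s t : ℝ, 0 ≤ s → s ≤ t →
    Indep (MeasurableSpace.comap (fun ω => B t ω - B s ω) inferInstance)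
      (natSigma B s) P

/-- `W` is a standard `n`-dimensional Brownian motion started at the origin:
its coordinate processes are independent standard one-dimensional Brownian motions. -/
def IsBrownianMotionND {Ω : Type*} [MeasurableSpace Ω] (P : Measure Ω) {n : ℕ}
    (W : ℝ → Ω → EuclideanSpace ℝ (Fin n)) : Prop :=
  (∀ i : Fin n, IsBrownianMotion P (fun t ω => W t ω i)) ∧
  iIndep (fun i : Fin n => procSigma (fun t ω => W t ω i)) P

/-- The least concave majorant on `[0, ∞)` of a function `f : ℝ → ℝ`:
`t ↦ inf { c t | c concave on [0,∞) and c ≥ f on [0,∞) }`. -/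
def concaveMajorant (f : ℝ → ℝ) (t : ℝ) : ℝ :=
  sInf {y | ∃ c : ℝ → ℝ, ConcaveOn ℝ (Set.Ici 0) c ∧ (∀ u, 0 ≤ u → f u ≤ c u) ∧ y = c t}

/-- Right-hand derivative. -/
def rightDeriv (f : ℝ → ℝ) (t : ℝ) : ℝ := derivWithin f (Set.Ioi t) t

/-- `D(t)`: the first vertex (contact point of the concave majorant) at or after time `t`. -/
def firstVertex (f : ℝ → ℝ) (t : ℝ) : ℝ :=
  sInf {u | t ≤ u ∧ concaveMajorant f u = f u}

/-- The concave majorant process `K` of `B`. -/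
def Kproc {Ω : Type*} (B : ℝ → Ω → ℝ) (t : ℝ) (ω : Ω) : ℝ :=
  concaveMajorant (fun u => B u ω) t

/-- The process `X = 2K - B`. -/
def Xproc {Ω : Type*} (B : ℝ → Ω → ℝ) (t : ℝ) (ω : Ω) : ℝ :=
  2 * Kproc B t ω - B t ω

/-- The right-hand slope process `K'` of the concave majorant. -/
def Kslope {Ω : Type*} (B : ℝ → Ω → ℝ) (t : ℝ) (ω : Ω) : ℝ :=
  rightDeriv (fun u => Kproc B u ω) t

/-- The process `D` of first vertices: `D(t) = inf {u ≥ t : K u = B u}`. -/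
def Dproc {Ω : Type*} (B : ℝ → Ω → ℝ) (t : ℝ) (ω : Ω) : ℝ :=
  firstVertex (fun u => B u ω) t

/-- A process `Y` is Markov (w.r.t. its natural filtration): for all `0 ≤ s ≤ t`,
`σ(Y t)` is conditionally independent of `σ(Y u : 0 ≤ u ≤ s)` given `σ(Y s)`. -/
def IsMarkov {Ω E : Type*} [mΩ : MeasurableSpace Ω] [StandardBorelSpace Ω]
    [MeasurableSpace E] (P : Measure Ω) [IsFiniteMeasure P] (Y : ℝ → Ω → E) : Prop :=
  ∀ s t : ℝ, 0 ≤ s → s ≤ t →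
    ∃ hs : MeasurableSpace.comap (Y s) inferInstance ≤ mΩ,
      CondIndep (MeasurableSpace.comap (Y s) inferInstance)
        (MeasurableSpace.comap (Y t) inferInstance)
        (natSigma Y s) hs P

/-!
As `ε → 0`, a BES(`n`) process is at most `ε` at all the times `1, …, m` with probability
`O(ε ^ (n * m))`, whereas for `X = 2K - B` this probability is at least of order
`ε ^ (3 * m + 2)`. Indeed, if `B u ≤ δ + δ * u` for all `u ≥ 0` and `B j ≥ -2 * δ * j` for
`1 ≤ j ≤ m`, then `K j ≤ δ + δ * j` and so `X j ≤ (4 * m + 2) * δ` at these times. By the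
reflection principle, each of the first `m` unit steps costs a factor `δ ^ 3`; by the maximal
inequality for the exponential martingale, staying below the line afterwards costs `δ ^ 2`. For
`n ≥ 4` the exponents with `m = 3` are `3 * n ≥ 12 > 11`.
-/

section

open scoped ENNReal NNReal

section Probability

variable {Ω : Type*} {m₁ m₂ mΩ : MeasurableSpace Ω} {μ : Measure Ω}

lemma measurableSet_disjointed {C : ℕ → Set Ω} {k : ℕ} (hC : ∀ j ≤ k, MeasurableSet (C j)) :
    MeasurableSet (disjointed C k) := by
  rw [disjointed_eq_inter_compl]
  exact (hC k le_rfl).inter (.iInter fun j ↦ .iInter fun hj ↦ (hC j hj.le).compl)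

lemma cond_apply_of_indep (h : Indep m₁ m₂ μ) (hm₂ : m₂ ≤ mΩ) {A T : Set Ω}
    (hA : MeasurableSet[m₂] A) (hA₀ : μ A ≠ 0) (hA' : μ A ≠ ∞) (hT : MeasurableSet[m₁] T) :
    μ[|A] T = μ T := by
  rw [cond_apply (hm₂ _ hA), inter_comm, (Indep_iff _ _ _).1 h T A hT hA, mul_comm, mul_assoc,
    ENNReal.mul_inv_cancel hA₀ hA', mul_one]

lemma indep_cond (h : Indep m₁ m₂ μ) (hm₂ : m₂ ≤ mΩ) {A : Set Ω}
    (hA : MeasurableSet[m₂] A) (hA₀ : μ A ≠ 0) (hA' : μ A ≠ ∞) : Indep m₁ m₂ μ[|A] := by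
  refine (Indep_iff _ _ _).2 fun T₁ T₂ hT₁ hT₂ ↦ ?_
  rw [cond_apply_of_indep h hm₂ hA hA₀ hA' hT₁, cond_apply (hm₂ _ hA), cond_apply (hm₂ _ hA),
    inter_left_comm, (Indep_iff _ _ _).1 h T₁ (A ∩ T₂) hT₁ (hA.inter hT₂), mul_left_comm]

lemma measure_preimage_eq_of_map_eq {Ω' E : Type*} [MeasurableSpace Ω'] [MeasurableSpace E]
    {ν : Measure Ω'} [NeZero ν] {f : Ω → E} {g : Ω' → E} (hg : AEMeasurable g ν)
    (h : μ.map f = ν.map g) {S : Set E} (hS : MeasurableSet S) : μ (f ⁻¹' S) = ν (g ⁻¹' S) := by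
  -- `μ.map f` would be the junk value `0` if `f` were not a.e. measurable.
  have : NeZero (μ.map f) := ⟨by rw [h]; exact (Measure.map_ne_zero_iff hg).2 (NeZero.ne ν)⟩
  rw [← Measure.map_apply_of_aemeasurable (aemeasurable_of_map_neZero this) hS, h,
    Measure.map_apply_of_aemeasurable hg hS]

/-- The filtration `ℱ` observed only at the times `τ 0 ≤ τ 1 ≤ ⋯`, which brings the discrete-time
maximal inequality to bear on a martingale with any index set. -/
def sampledFiltration {ι : Type*} [Preorder ι] (ℱ : Filtration ι mΩ) {τ : ℕ → ι}
    (hτ : Monotone τ) : Filtration ℕ mΩ where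
  seq k := ℱ (τ k)
  mono' _ _ h := ℱ.mono (hτ h)
  le' k := ℱ.le (τ k)

lemma martingale_sampled {ι : Type*} [Preorder ι] {ℱ : Filtration ι mΩ} {M : ι → Ω → ℝ}
    (hM : Martingale M ℱ μ) {τ : ℕ → ι} (hτ : Monotone τ) :
    Martingale (fun k ↦ M (τ k)) (sampledFiltration ℱ hτ) μ :=
  ⟨fun k ↦ hM.1 (τ k), fun _ _ h ↦ hM.2 _ _ (hτ h)⟩

lemma ville_inequality [IsFiniteMeasure μ] {ℱ : Filtration ℕ mΩ} {M : ℕ → Ω → ℝ}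
    (hM : Martingale M ℱ μ) (hM₀ : 0 ≤ M) (ε : ℝ≥0) :
    ε * μ {ω | ∃ k, ε ≤ M k ω} ≤ ENNReal.ofReal (∫ ω, M 0 ω ∂μ) := by
  have hunion : {ω | ∃ k, ε ≤ M k ω} = ⋃ n, {ω | ∃ k ≤ n, ε ≤ M k ω} := by
    ext ω
    simp only [mem_ofPred_eq, mem_iUnion]
    exact ⟨fun ⟨k, hk⟩ ↦ ⟨k, k, le_rfl, hk⟩, fun ⟨_, k, _, hk⟩ ↦ ⟨k, hk⟩⟩
  have hmono : Monotone fun n ↦ {ω | ∃ k ≤ n, ε ≤ M k ω} :=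
    fun _ _ hnn' _ ⟨k, hk, h⟩ ↦ ⟨k, hk.trans hnn', h⟩
  rw [hunion, hmono.measure_iUnion, ENNReal.mul_iSup]
  refine iSup_le fun n ↦ ?_
  calc ε * μ {ω | ∃ k ≤ n, ε ≤ M k ω}
      = ε * μ {ω | (ε : ℝ) ≤ (Finset.range (n + 1)).sup' Finset.nonempty_range_add_one
          fun k ↦ M k ω} := by
        simp only [Finset.le_sup'_iff, Finset.mem_range, Order.lt_add_one_iff]
    _ ≤ ENNReal.ofReal (∫ ω in _, M n ω ∂μ) := maximal_ineq hM.submartingale hM₀ n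
    _ ≤ ENNReal.ofReal (∫ ω, M n ω ∂μ) := ENNReal.ofReal_le_ofReal <|
        setIntegral_le_integral (hM.integrable n) (.of_forall fun ω ↦ hM₀ n ω)
    _ = ENNReal.ofReal (∫ ω, M 0 ω ∂μ) := by
        simpa using congrArg ENNReal.ofReal (hM.setIntegral_eq n.zero_le MeasurableSet.univ).symm

end Probability

section Gaussian

lemma gaussianReal_le_gaussianReal {m m' : ℝ} {v : ℝ≥0} {S : Set ℝ} (hS : MeasurableSet S)
    (h : ∀ x ∈ S, |x - m'| ≤ |x - m|) : gaussianReal m v S ≤ gaussianReal m' v S := by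
  rcases eq_or_ne v 0 with rfl | hv
  · simp only [gaussianReal_zero_var, Measure.dirac_apply' _ hS]
    by_cases hm : m ∈ S
    · have hmm' : m - m' = 0 := by simpa using h m hm
      rw [sub_eq_zero.1 hmm']
    · simp [hm]
  · rw [gaussianReal_apply _ hv, gaussianReal_apply _ hv]
    refine setLIntegral_mono (by fun_prop) fun x hx ↦ ENNReal.ofReal_le_ofReal ?_
    have hsq : (x - m') ^ 2 ≤ (x - m) ^ 2 := sq_le_sq.2 (h x hx)
    unfold gaussianPDFReal
    gcongr

lemma gaussianReal_one_le_volume (m : ℝ) (S : Set ℝ) : gaussianReal m 1 S ≤ volume S := by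
  have hpdf (x : ℝ) : gaussianPDF m 1 x ≤ 1 := by
    have hconst : (√(2 * Real.pi))⁻¹ ≤ 1 :=
      inv_le_one_of_one_le₀ (Real.one_le_sqrt.2 (by linarith [Real.pi_gt_three]))
    have hexp : Real.exp (-(x - m) ^ 2 / 2) ≤ 1 :=
      Real.exp_le_one_iff.2 (by linarith [sq_nonneg (x - m)])
    rw [gaussianPDF, ENNReal.ofReal_le_one, gaussianPDFReal]
    simp only [NNReal.coe_one, mul_one]
    exact mul_le_one₀ hconst (Real.exp_pos _).le hexp
  calc gaussianReal m 1 S = ∫⁻ x in S, gaussianPDF m 1 x := gaussianReal_apply _ one_ne_zero _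
    _ ≤ ∫⁻ _ in S, 1 := lintegral_mono hpdf
    _ = volume S := setLIntegral_one S

lemma exp_neg_le_one_sub_half {x : ℝ} (h₀ : 0 ≤ x) (h₁ : x ≤ 1) :
    Real.exp (-x) ≤ 1 - x / 2 := by
  rw [Real.exp_neg, inv_le_comm₀ (Real.exp_pos _) (by linarith)]
  refine le_trans ?_ (Real.add_one_le_exp x)
  rw [inv_le_iff_one_le_mul₀ (by linarith)]
  nlinarith

lemma gaussianPDFReal_gap {δ x : ℝ} (hδ : 0 < δ) (hδ' : δ ≤ 1 / 4)
    (hx : x ∈ Icc (-2 * δ) (-δ)) :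
    gaussianPDFReal (2 * δ) 1 x + 2 / 5 * δ ^ 2 ≤ gaussianPDFReal 0 1 x := by
  obtain ⟨hx₁, hx₂⟩ := hx
  set q := (√(2 * Real.pi))⁻¹ with hq
  have hq' : 1 / 2.51 ≤ q := by
    rw [hq, one_div]
    refine inv_anti₀ (by positivity) ((Real.sqrt_le_left (by norm_num)).2 ?_)
    norm_num
    linarith [Real.pi_lt_d4]
  have hexp : 7 / 8 ≤ Real.exp (-x ^ 2 / 2) := by nlinarith [Real.add_one_le_exp (-x ^ 2 / 2)]
  have hpeak : 1 / 5 ≤ q * Real.exp (-x ^ 2 / 2) :=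
    calc (1 : ℝ) / 5 ≤ 1 / 2.51 * (7 / 8) := by norm_num
      _ ≤ q * Real.exp (-x ^ 2 / 2) := by gcongr
  have hratio : Real.exp (-(x - 2 * δ) ^ 2 / 2) ≤ Real.exp (-x ^ 2 / 2) * (1 - 2 * δ ^ 2) :=
    calc Real.exp (-(x - 2 * δ) ^ 2 / 2)
        ≤ Real.exp (-x ^ 2 / 2 + -(4 * δ ^ 2)) := Real.exp_le_exp.2 (by nlinarith)
      _ = Real.exp (-x ^ 2 / 2) * Real.exp (-(4 * δ ^ 2)) := Real.exp_add _ _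
      _ ≤ Real.exp (-x ^ 2 / 2) * (1 - 2 * δ ^ 2) := by
          gcongr
          linarith [exp_neg_le_one_sub_half (x := 4 * δ ^ 2) (by positivity) (by nlinarith)]
  have hq₀ : 0 ≤ q := by positivity
  simp only [gaussianPDFReal, NNReal.coe_one, mul_one, sub_zero, ← hq]
  nlinarith [mul_le_mul_of_nonneg_left hratio hq₀,
    mul_le_mul_of_nonneg_right hpeak (by positivity : 0 ≤ 2 * δ ^ 2)]

lemma gaussianReal_gap {δ : ℝ} (hδ : 0 < δ) (hδ' : δ ≤ 1 / 4) :
    gaussianReal (2 * δ) 1 (Icc (-2 * δ) (-δ)) + ENNReal.ofReal (2 / 5 * δ ^ 3)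
      ≤ gaussianReal 0 1 (Icc (-2 * δ) (-δ)) := by
  have hconst : ENNReal.ofReal (2 / 5 * δ ^ 3)
      = ∫⁻ _ in Icc (-2 * δ) (-δ), ENNReal.ofReal (2 / 5 * δ ^ 2) := by
    rw [setLIntegral_const, Real.volume_Icc, ← ENNReal.ofReal_mul (by positivity)]
    congr 1
    ring
  rw [hconst, gaussianReal_apply _ one_ne_zero, gaussianReal_apply _ one_ne_zero,
    ← lintegral_add_right _ measurable_const]
  refine setLIntegral_mono (by fun_prop) fun x hx ↦ ?_
  rw [gaussianPDF, gaussianPDF, ← ENNReal.ofReal_add (gaussianPDFReal_nonneg _ _ _) (by positivity)]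
  exact ENNReal.ofReal_le_ofReal (gaussianPDFReal_gap hδ hδ' hx)

lemma integrable_exp_mul_sub {Ω : Type*} [MeasurableSpace Ω] {μ : Measure Ω} {Z : Ω → ℝ}
    {v : ℝ≥0} (hZ : HasLaw Z (gaussianReal 0 v) μ) (c d : ℝ) :
    Integrable (fun ω ↦ Real.exp (c * Z ω - d)) μ := by
  have hexp : Integrable (fun x ↦ Real.exp (c * x)) (μ.map Z) := by
    rw [hZ.map_eq]
    exact integrable_exp_mul_gaussianReal c
  simp only [Real.exp_sub]
  exact (hexp.comp_aemeasurable hZ.aemeasurable).div_const _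

lemma integral_exp_mul_sub {Ω : Type*} [MeasurableSpace Ω] {μ : Measure Ω} {Z : Ω → ℝ}
    {v : ℝ≥0} (hZ : HasLaw Z (gaussianReal 0 v) μ) (c : ℝ) :
    ∫ ω, Real.exp (c * Z ω - v * c ^ 2 / 2) ∂μ = 1 := by
  have hmgf : ∫ ω, Real.exp (c * Z ω) ∂μ = Real.exp (v * c ^ 2 / 2) := by
    simpa only [mgf, zero_mul, zero_add] using mgf_gaussianReal hZ.map_eq c
  simp only [Real.exp_sub, integral_div, hmgf]
  exact div_self (Real.exp_ne_zero _)

lemma measure_add_mem_le_measure_reflect {Ω : Type*} [MeasurableSpace Ω] {μ : Measure Ω}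
    [IsFiniteMeasure μ] {Y Z : Ω → ℝ} (hY : AEMeasurable Y μ) {v : ℝ≥0}
    (hZ : HasLaw Z (gaussianReal 0 v) μ) (hYZ : Y ⟂ᵢ[μ] Z) {a : ℝ} (ha : ∀ᵐ ω ∂μ, a ≤ Y ω)
    {S : Set ℝ} (hS : MeasurableSet S) (hSa : S ⊆ Iic a) :
    μ {ω | Y ω + Z ω ∈ S} ≤ μ {ω | 2 * a - (Y ω + Z ω) ∈ S} := by
  have hlaw : HasLaw (fun ω ↦ (Y ω, Z ω)) ((μ.map Y).prod (gaussianReal 0 v)) μ :=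
    hYZ.hasLaw_prod ⟨hY, rfl⟩ hZ
  have hsum : MeasurableSet {p : ℝ × ℝ | p.1 + p.2 ∈ S} := measurable_fst.add measurable_snd hS
  have hrefl : MeasurableSet {p : ℝ × ℝ | 2 * a - (p.1 + p.2) ∈ S} :=
    measurable_const.sub (measurable_fst.add measurable_snd) hS
  have ha' : ∀ᵐ y ∂μ.map Y, a ≤ y := (ae_map_iff hY measurableSet_Ici).2 ha
  rw [hlaw.measure_eq hsum, hlaw.measure_eq hrefl, Measure.prod_apply hsum,
    Measure.prod_apply hrefl]
  refine lintegral_mono_ae (ha'.mono fun y hy ↦ ?_)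
  calc gaussianReal 0 v {z | y + z ∈ S} = gaussianReal y v S := by
        simpa using (gaussianReal_const_add (.id (μ := gaussianReal 0 v)) y).measure_eq
          (p := (· ∈ S)) hS
    _ ≤ gaussianReal (2 * a - y) v S := gaussianReal_le_gaussianReal hS fun x hx ↦ by
        have hxa : x ≤ a := hSa hx
        rw [abs_of_nonpos (by linarith : x - y ≤ 0), abs_le]
        constructor <;> linarith
    _ = gaussianReal 0 v {z | 2 * a - (y + z) ∈ S} := by
        simpa [sub_sub] using ((gaussianReal_const_sub (.id (μ := gaussianReal 0 v))
          (2 * a - y)).measure_eq (p := (· ∈ S)) hS).symm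

end Gaussian

section Brownian

variable {Ω : Type*}

lemma natSigma_mono {E : Type*} [MeasurableSpace E] (Y : ℝ → Ω → E) {s t : ℝ} (h : s ≤ t) :
    natSigma Y s ≤ natSigma Y t :=
  iSup_le fun u ↦ le_iSup (fun v : Icc (0 : ℝ) t ↦ MeasurableSpace.comap (Y v) inferInstance)
    ⟨u, u.2.1, u.2.2.trans h⟩

lemma measurable_natSigma {E : Type*} [MeasurableSpace E] (Y : ℝ → Ω → E) {u t : ℝ}
    (hu : 0 ≤ u) (hut : u ≤ t) : Measurable[natSigma Y t] (Y u) :=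
  measurable_iff_comap_le.2 <|
    le_iSup (fun v : Icc (0 : ℝ) t ↦ MeasurableSpace.comap (Y v) inferInstance) ⟨u, hu, hut⟩

lemma measurable_procSigma {E : Type*} [MeasurableSpace E] (Y : ℝ → Ω → E) {u : ℝ}
    (hu : 0 ≤ u) : Measurable[procSigma Y] (Y u) :=
  measurable_iff_comap_le.2 <|
    le_iSup (fun v : Ici (0 : ℝ) ↦ MeasurableSpace.comap (Y v) inferInstance) ⟨u, hu⟩

/-- The path `B` restarted from `0` at time `s`; for a Brownian motion it is again a Brownian
motion, also conditionally on an event of the past of `s`. -/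
def restart (B : ℝ → Ω → ℝ) (s : ℝ) (r : ℝ) (ω : Ω) : ℝ := B (s + r) ω - B s ω

lemma restart_sub (B : ℝ → Ω → ℝ) (s t : ℝ) :
    restart B s (t - s) = fun ω ↦ B t ω - B s ω := by
  ext ω
  rw [restart, add_sub_cancel]

lemma natSigma_restart_le (B : ℝ → Ω → ℝ) {s : ℝ} (hs : 0 ≤ s) (r : ℝ) :
    natSigma (restart B s) r ≤ natSigma B (s + r) := by
  refine iSup_le fun u ↦ measurable_iff_comap_le.1 ?_
  exact (measurable_natSigma B (add_nonneg hs u.2.1) (by linarith [u.2.2])).sub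
    (measurable_natSigma B hs (by linarith [u.2.1, u.2.2]))

namespace IsBrownianMotion

variable [MeasurableSpace Ω] {P : Measure Ω} {B : ℝ → Ω → ℝ}

lemma hasLaw_sub (hB : IsBrownianMotion P B) {s t : ℝ} (hs : 0 ≤ s) (hst : s ≤ t) :
    HasLaw (fun ω ↦ B t ω - B s ω) (gaussianReal 0 (t - s).toNNReal) P where
  aemeasurable := ((hB.measurable t).sub (hB.measurable s)).aemeasurable
  map_eq := hB.incr_law s t hs hst

lemma hasLaw_eval (hB : IsBrownianMotion P B) {t : ℝ} (ht : 0 ≤ t) :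
    HasLaw (B t) (gaussianReal 0 t.toNNReal) P := by
  refine (sub_zero t ▸ hB.hasLaw_sub le_rfl ht).congr (hB.init.mono fun ω hω ↦ ?_)
  simp [hω]

lemma isProbabilityMeasure (hB : IsBrownianMotion P B) : IsProbabilityMeasure P :=
  (hB.hasLaw_eval le_rfl).isProbabilityMeasure

lemma natSigma_le (hB : IsBrownianMotion P B) (t : ℝ) : natSigma B t ≤ ‹MeasurableSpace Ω› :=
  iSup_le fun u ↦ (hB.measurable u).comap_le

/-- The natural filtration of `B`, indexed by `ℝ≥0`. -/
def filtration (hB : IsBrownianMotion P B) : Filtration ℝ≥0 ‹MeasurableSpace Ω› where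
  seq t := natSigma B t
  mono' _ _ h := natSigma_mono B (NNReal.coe_le_coe.2 h)
  le' t := hB.natSigma_le t

lemma restart_cond (hB : IsBrownianMotion P B) {s : ℝ} (hs : 0 ≤ s) {A : Set Ω}
    (hA : MeasurableSet[natSigma B s] A) (hA₀ : P A ≠ 0) :
    IsBrownianMotion P[|A] (restart B s) where
  measurable t := (hB.measurable _).sub (hB.measurable _)
  init := .of_forall fun ω ↦ by simp [restart]
  cont := by
    filter_upwards [cond_absolutelyContinuous.ae_le hB.cont] with ω hω
    refine ContinuousOn.sub (hω.comp (by fun_prop) fun r hr ↦ ?_) continuousOn_const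
    exact add_nonneg hs hr
  incr_law r t hr hrt := by
    have := hB.isProbabilityMeasure
    have hmeas : Measurable fun ω ↦ B (s + t) ω - B (s + r) ω :=
      (hB.measurable _).sub (hB.measurable _)
    have hindep := hB.incr_indep (s + r) (s + t) (by positivity) (by linarith)
    simp only [restart, sub_sub_sub_cancel_right]
    rw [← add_sub_add_left_eq_sub t r s,
      ← hB.incr_law (s + r) (s + t) (by positivity) (by linarith)]
    ext T hT
    rw [Measure.map_apply hmeas hT, Measure.map_apply hmeas hT]
    exact cond_apply_of_indep hindep (hB.natSigma_le _) (natSigma_mono B (by linarith) _ hA)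
      hA₀ (measure_ne_top P A) ⟨T, hT, rfl⟩
  incr_indep r t hr hrt := by
    have := hB.isProbabilityMeasure
    have hindep := hB.incr_indep (s + r) (s + t) (by positivity) (by linarith)
    simp only [restart, sub_sub_sub_cancel_right]
    exact indep_of_indep_of_le_right
      (indep_cond hindep (hB.natSigma_le _) (natSigma_mono B (by linarith) _ hA) hA₀
        (measure_ne_top P A)) (natSigma_restart_le B hs r)

lemma measure_inter_le_measure_inter_reflect (hB : IsBrownianMotion P B) {s t : ℝ} (hs : 0 ≤ s)
    (hst : s ≤ t) {F : Set Ω} (hF : MeasurableSet[natSigma B s] F) {a : ℝ}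
    (ha : ∀ ω ∈ F, a ≤ B s ω) {S : Set ℝ} (hS : MeasurableSet S) (hSa : S ⊆ Iic a) :
    P (F ∩ {ω | B t ω ∈ S}) ≤ P (F ∩ {ω | 2 * a - B t ω ∈ S}) := by
  have := hB.isProbabilityMeasure
  have hF' := hB.natSigma_le s F hF
  rcases eq_or_ne (P F) 0 with hF₀ | hF₀
  · rw [measure_inter_null_of_null_left _ hF₀]
    exact zero_le
  have := cond_isProbabilityMeasure hF₀
  have hincr := hB.restart_cond hs hF hF₀
  have hindep : (B s) ⟂ᵢ[P[|F]] (restart B s (t - s)) := by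
    refine (indep_of_indep_of_le_right ?_ (measurable_natSigma B hs le_rfl).comap_le).symm
    simp only [restart_sub]
    exact indep_cond (hB.incr_indep s t hs hst) (hB.natSigma_le s) hF hF₀ (measure_ne_top P F)
  have hreflect := measure_add_mem_le_measure_reflect (hB.measurable s).aemeasurable
    (hincr.hasLaw_eval (sub_nonneg.2 hst)) hindep ((ae_cond_mem hF').mono ha) hS hSa
  simp only [restart, add_sub_cancel] at hreflect
  simpa only [cond_mul_eq_inter hF'] using mul_le_mul_left hreflect (P F)

lemma measure_inter_exists_le (hB : IsBrownianMotion P B) {t : ℝ≥0} {τ : ℕ → ℝ≥0}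
    (hτ : Monotone τ) (hτt : ∀ k, τ k ≤ t) {a : ℝ} {S : Set ℝ} (hS : MeasurableSet S)
    (hSa : S ⊆ Iic a) :
    P ({ω | B t ω ∈ S} ∩ {ω | ∃ k, a ≤ B (τ k) ω}) ≤ P {ω | 2 * a - B t ω ∈ S} := by
  set C : ℕ → Set Ω := fun k ↦ {ω | a ≤ B (τ k) ω} with hC
  have hCmeas (k : ℕ) : MeasurableSet[natSigma B (τ k)] (disjointed C k) :=
    measurableSet_disjointed fun j hj ↦
      measurable_natSigma B (τ j).2 (NNReal.coe_le_coe.2 (hτ hj)) measurableSet_Ici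
  have hCmeas' (k : ℕ) : MeasurableSet (disjointed C k) := hB.natSigma_le _ _ (hCmeas k)
  have hsum (T : Set Ω) (hT : MeasurableSet T) :
      P ((⋃ k, disjointed C k) ∩ T) = ∑' k, P (disjointed C k ∩ T) := by
    rw [iUnion_inter, measure_iUnion _ fun k ↦ (hCmeas' k).inter hT]
    exact fun i j hij ↦ (disjoint_disjointed C hij).mono inter_subset_left inter_subset_left
  calc P ({ω | B t ω ∈ S} ∩ {ω | ∃ k, a ≤ B (τ k) ω})
      = P ((⋃ k, disjointed C k) ∩ {ω | B t ω ∈ S}) := by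
        rw [iUnion_disjointed, inter_comm, hC, ofPred_exists]
    _ = ∑' k, P (disjointed C k ∩ {ω | B t ω ∈ S}) := hsum _ (hB.measurable t hS)
    _ ≤ ∑' k, P (disjointed C k ∩ {ω | 2 * a - B t ω ∈ S}) := ENNReal.tsum_le_tsum fun k ↦
        hB.measure_inter_le_measure_inter_reflect (τ k).2 (hτt k) (hCmeas k)
          (fun ω hω ↦ disjointed_subset C k hω) hS hSa
    _ = P ((⋃ k, disjointed C k) ∩ {ω | 2 * a - B t ω ∈ S}) :=
        (hsum _ ((measurable_const.sub (hB.measurable t)) hS)).symm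
    _ ≤ P {ω | 2 * a - B t ω ∈ S} := measure_mono inter_subset_right

lemma martingale_exp (hB : IsBrownianMotion P B) (c : ℝ) :
    Martingale (fun (t : ℝ≥0) ω ↦ Real.exp (c * B t ω - t * c ^ 2 / 2)) hB.filtration P := by
  have := hB.isProbabilityMeasure
  set M := fun (t : ℝ≥0) ω ↦ Real.exp (c * B t ω - t * c ^ 2 / 2) with hM
  have hM_meas (t : ℝ≥0) : StronglyMeasurable[hB.filtration t] (M t) :=
    Measurable.stronglyMeasurable <| Real.measurable_exp.comp <|
      ((measurable_natSigma B t.coe_nonneg le_rfl).const_mul c).sub_const _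
  refine ⟨hM_meas, fun s t hst ↦ ?_⟩
  have hst' : (s : ℝ) ≤ t := NNReal.coe_le_coe.2 hst
  set Z := fun ω ↦ B t ω - B s ω
  set R := fun ω ↦ Real.exp (c * Z ω - (t - s : ℝ).toNNReal * c ^ 2 / 2) with hR
  have hZ : HasLaw Z (gaussianReal 0 (t - s : ℝ).toNNReal) P := hB.hasLaw_sub s.coe_nonneg hst'
  have hR_meas : StronglyMeasurable[MeasurableSpace.comap Z inferInstance] R :=
    Measurable.stronglyMeasurable <| Real.measurable_exp.comp <|
      ((comap_measurable Z).const_mul c).sub_const _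
  have hM_int : Integrable (M t) P := integrable_exp_mul_sub (hB.hasLaw_eval t.coe_nonneg) c _
  have hfactor : M t = M s * R := by
    ext ω
    simp only [hM, hR, Z, Pi.mul_apply, ← Real.exp_add, Real.coe_toNNReal _ (sub_nonneg.2 hst')]
    ring_nf
  calc P[M t | hB.filtration s] = P[M s * R | hB.filtration s] := by rw [hfactor]
    _ =ᵐ[P] M s * P[R | hB.filtration s] :=
        condExp_mul_of_stronglyMeasurable_left (hM_meas s) (hfactor ▸ hM_int)
          (integrable_exp_mul_sub hZ c _)
    _ =ᵐ[P] M s * fun _ ↦ ∫ ω, R ω ∂P := .mul .rfl <|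
        condExp_indep_eq ((hB.measurable t).sub (hB.measurable s)).comap_le (hB.filtration.le s)
          hR_meas (hB.incr_indep s t s.coe_nonneg hst')
    _ = M s := by
        rw [integral_exp_mul_sub hZ c]
        exact mul_one (M s)

lemma measure_exists_line_le (hB : IsBrownianMotion P B) {τ : ℕ → ℝ≥0} (hτ : Monotone τ)
    (a : ℝ) {b : ℝ} (hb : 0 ≤ b) :
    P {ω | ∃ k, a + b * τ k ≤ B (τ k) ω} ≤ ENNReal.ofReal (Real.exp (-(2 * a * b))) := by
  have := hB.isProbabilityMeasure
  -- `c = 2b` is the optimal exponent: the drift `c²t/2` is then `c · bt`.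
  have hville := ville_inequality (martingale_sampled (hB.martingale_exp (2 * b)) hτ)
    (fun k ω ↦ (Real.exp_pos _).le) (Real.exp (2 * a * b)).toNNReal
  have hmean : ∫ ω, Real.exp (2 * b * B (τ 0) ω - τ 0 * (2 * b) ^ 2 / 2) ∂P = 1 := by
    simpa only [Real.toNNReal_coe] using
      integral_exp_mul_sub (hB.hasLaw_eval (τ 0).coe_nonneg) (2 * b)
  rw [hmean, ENNReal.ofReal_one, mul_comm] at hville
  calc P {ω | ∃ k, a + b * τ k ≤ B (τ k) ω}
      ≤ P {ω | ∃ k, ((Real.exp (2 * a * b)).toNNReal : ℝ)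
          ≤ Real.exp (2 * b * B (τ k) ω - τ k * (2 * b) ^ 2 / 2)} := by
        refine measure_mono fun ω ⟨k, hk⟩ ↦ ⟨k, ?_⟩
        rw [Real.coe_toNNReal _ (Real.exp_pos _).le, Real.exp_le_exp]
        nlinarith
    _ ≤ (ENNReal.ofReal (Real.exp (2 * a * b)))⁻¹ := ENNReal.le_inv_iff_mul_le.2 hville
    _ = ENNReal.ofReal (Real.exp (-(2 * a * b))) := by
        rw [Real.exp_neg, ENNReal.ofReal_inv_of_pos (Real.exp_pos _)]

end IsBrownianMotion

end Brownian

section ConcaveMajorant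

/-- The dyadic times `0, 2⁻ⁿ, 2 · 2⁻ⁿ, …` of level `n`, at which a path is observed so that events
about its supremum are measurable without using continuity. -/
def dyadicTime (n k : ℕ) : ℝ≥0 := k / 2 ^ n

lemma dyadicTime_mono (n : ℕ) : Monotone (dyadicTime n) := fun j k hjk ↦ by
  unfold dyadicTime
  gcongr

lemma dyadicTime_succ_two_mul (n k : ℕ) : dyadicTime (n + 1) (2 * k) = dyadicTime n k := by
  simp only [dyadicTime, Nat.cast_mul, Nat.cast_ofNat, pow_succ']
  exact mul_div_mul_left _ _ two_ne_zero

lemma dyadicTime_two_pow_add (n k : ℕ) : dyadicTime n (2 ^ n + k) = 1 + dyadicTime n k := by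
  simp [dyadicTime, add_div]

lemma two_pow_le_of_one_le_dyadicTime {n k : ℕ} (h : 1 ≤ dyadicTime n k) : 2 ^ n ≤ k := by
  rw [dyadicTime, one_le_div (by positivity)] at h
  exact_mod_cast h

lemma le_of_forall_dyadicTime {f g : ℝ → ℝ} (hf : ContinuousOn f (Ici 0))
    (hg : ContinuousOn g (Ici 0)) (h : ∀ n k, f (dyadicTime n k) ≤ g (dyadicTime n k)) {u : ℝ}
    (hu : 0 ≤ u) : f u ≤ g u := by
  have hlim : Tendsto (fun n ↦ (dyadicTime n ⌊u * 2 ^ n⌋₊ : ℝ)) atTop (𝓝[Ici 0] u) := by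
    refine tendsto_nhdsWithin_iff.2 ⟨?_, .of_forall fun n ↦ NNReal.coe_nonneg _⟩
    simpa [dyadicTime, Function.comp_def] using (tendsto_nat_floor_mul_div_atTop hu).comp
      (tendsto_pow_atTop_atTop_of_one_lt (one_lt_two (α := ℝ)))
  exact le_of_tendsto_of_tendsto' ((hf u hu).tendsto.comp hlim) ((hg u hu).tendsto.comp hlim)
    fun n ↦ h n _

lemma concaveMajorant_le {f c : ℝ → ℝ} (hc : ConcaveOn ℝ (Ici 0) c)
    (hfc : ∀ u, 0 ≤ u → f u ≤ c u) {t : ℝ} (ht : 0 ≤ t) : concaveMajorant f t ≤ c t := by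
  refine csInf_le ⟨f t, ?_⟩ ⟨c, hc, hfc, rfl⟩
  rintro _ ⟨c', -, hfc', rfl⟩
  exact hfc' t ht

lemma concaveOn_line (a b : ℝ) : ConcaveOn ℝ (Ici 0) fun u ↦ a + b * u :=
  (concaveOn_const a (convex_Ici 0)).add ((LinearMap.mulLeft ℝ b).concaveOn (convex_Ici 0))

end ConcaveMajorant

section LowerBound

variable {Ω : Type*}

/-- The path `B` ends in `[-2δ, -δ]` at time `1` and stays below `δ` at the dyadic times of
level `n` in `[0, 1]`: one step of the strategy that keeps `2K - B` small. -/
def dip (B : ℝ → Ω → ℝ) (δ : ℝ) (n : ℕ) : Set Ω :=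
  {ω | B 1 ω ∈ Icc (-2 * δ) (-δ)} ∩ {ω | ∀ k, dyadicTime n k ≤ 1 → B (dyadicTime n k) ω < δ}

/-- The path `B` stays below the line `δ + δu` at the dyadic times of level `n`, and decreases
by at most `2δj` up to each of the times `j = 1, …, m`. -/
def belowLine (B : ℝ → Ω → ℝ) (δ : ℝ) (n m : ℕ) : Set Ω :=
  {ω | ∀ k, B (dyadicTime n k) ω < δ + δ * dyadicTime n k} ∩
    {ω | ∀ j < m, -2 * δ * (j + 1) ≤ B (j + 1) ω}

lemma measurableSet_dip (B : ℝ → Ω → ℝ) (δ : ℝ) (n : ℕ) :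
    MeasurableSet[natSigma B 1] (dip B δ n) := by
  refine MeasurableSet.inter (measurable_natSigma B zero_le_one le_rfl measurableSet_Icc) ?_
  simp only [ofPred_forall]
  exact .iInter fun k ↦ .iInter fun hk ↦
    measurable_natSigma B (NNReal.coe_nonneg _) (mod_cast hk) measurableSet_Iio

lemma measurableSet_belowLine [MeasurableSpace Ω] {B : ℝ → Ω → ℝ} (hB : ∀ t, Measurable (B t))
    (δ : ℝ) (n m : ℕ) : MeasurableSet (belowLine B δ n m) := by
  refine MeasurableSet.inter ?_ ?_ <;> simp only [ofPred_forall]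
  · exact .iInter fun k ↦ hB _ measurableSet_Iio
  · exact .iInter fun j ↦ .iInter fun _ ↦ hB _ measurableSet_Ici

lemma antitone_belowLine (B : ℝ → Ω → ℝ) (δ : ℝ) (m : ℕ) :
    Antitone fun n ↦ belowLine B δ n m :=
  antitone_nat_of_succ_le fun n _ hω ↦
    ⟨fun k ↦ by simpa only [dyadicTime_succ_two_mul] using hω.1 (2 * k), hω.2⟩

lemma dip_inter_belowLine_restart_subset (B : ℝ → Ω → ℝ) {δ : ℝ} (hδ : 0 ≤ δ) (n m : ℕ) :
    dip B δ n ∩ belowLine (restart B 1) δ n m ⊆ belowLine B δ n (m + 1) := by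
  rintro ω ⟨⟨⟨hend, hend'⟩, hdip⟩, hline, hlow⟩
  refine ⟨fun k ↦ ?_, fun j hj ↦ ?_⟩
  · rcases le_total (dyadicTime n k) 1 with hk | hk
    · nlinarith [hdip k hk, (dyadicTime n k).coe_nonneg]
    · obtain ⟨l, rfl⟩ := Nat.exists_eq_add_of_le (two_pow_le_of_one_le_dyadicTime hk)
      have hl := hline l
      simp only [restart] at hl
      simp only [dyadicTime_two_pow_add, NNReal.coe_add, NNReal.coe_one]
      nlinarith
  · rcases j with _ | j
    · simpa using hend
    · have hj' := hlow j (by lia)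
      simp only [restart] at hj'
      rw [Nat.cast_succ, add_comm _ (1 : ℝ)]
      linarith

namespace IsBrownianMotion

variable [MeasurableSpace Ω] {P : Measure Ω} {B : ℝ → Ω → ℝ} {δ : ℝ}

lemma le_measure_dip (hB : IsBrownianMotion P B) (hδ : 0 < δ) (hδ' : δ ≤ 1 / 4) (n : ℕ) :
    ENNReal.ofReal (2 / 5 * δ ^ 3) ≤ P (dip B δ n) := by
  set I := Icc (-2 * δ) (-δ)
  set E := {ω | ∃ k, δ ≤ B (min (dyadicTime n k) 1 : ℝ≥0) ω}
  have hlaw : HasLaw (B 1) (gaussianReal 0 1) P := by simpa using hB.hasLaw_eval zero_le_one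
  have hreflect : P ({ω | B 1 ω ∈ I} ∩ E) ≤ gaussianReal (2 * δ) 1 I :=
    calc P ({ω | B 1 ω ∈ I} ∩ E)
        ≤ P {ω | 2 * δ - B 1 ω ∈ I} := hB.measure_inter_exists_le (t := 1)
          ((dyadicTime_mono n).min monotone_const) (fun _ ↦ min_le_right _ _) measurableSet_Icc
          fun x hx ↦ show x ≤ δ by linarith [hx.2]
      _ = gaussianReal (2 * δ) 1 I := by
          simpa using (gaussianReal_const_sub hlaw (2 * δ)).measure_eq (p := (· ∈ I))
            measurableSet_Icc
  have hdip : {ω | B 1 ω ∈ I} \ E ⊆ dip B δ n := fun ω hω ↦ ⟨hω.1, fun k hk ↦ by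
    have hE : ¬ δ ≤ B (min (dyadicTime n k) 1 : ℝ≥0) ω := fun h ↦ hω.2 ⟨k, h⟩
    rwa [min_eq_left hk, not_le] at hE⟩
  refine (ENNReal.add_le_add_iff_left (measure_ne_top (gaussianReal (2 * δ) 1) I)).1 ?_
  calc gaussianReal (2 * δ) 1 I + ENNReal.ofReal (2 / 5 * δ ^ 3)
      ≤ gaussianReal 0 1 I := gaussianReal_gap hδ hδ'
    _ = P {ω | B 1 ω ∈ I} := (hlaw.measure_eq measurableSet_Icc).symm
    _ ≤ P ({ω | B 1 ω ∈ I} ∩ E) + P ({ω | B 1 ω ∈ I} \ E) := measure_le_inter_add_sdiff _ _ _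
    _ ≤ gaussianReal (2 * δ) 1 I + P (dip B δ n) := add_le_add hreflect (measure_mono hdip)

lemma le_measure_belowLine_zero (hB : IsBrownianMotion P B) (hδ : 0 < δ) (hδ' : δ ≤ 1 / 4)
    (n : ℕ) : ENNReal.ofReal (δ ^ 2) ≤ P (belowLine B δ n 0) := by
  have := hB.isProbabilityMeasure
  have hcompl : (belowLine B δ n 0)ᶜ
      ⊆ {ω | ∃ k, δ + δ * dyadicTime n k ≤ B (dyadicTime n k) ω} := fun ω hω ↦ by
    simpa [belowLine] using hω
  calc ENNReal.ofReal (δ ^ 2) ≤ 1 - ENNReal.ofReal (Real.exp (-(2 * δ * δ))) := by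
        rw [← ENNReal.ofReal_one, ← ENNReal.ofReal_sub _ (Real.exp_pos _).le]
        refine ENNReal.ofReal_le_ofReal ?_
        linarith [exp_neg_le_one_sub_half (x := 2 * δ * δ) (by positivity) (by nlinarith)]
    _ ≤ 1 - P (belowLine B δ n 0)ᶜ := tsub_le_tsub_left ((measure_mono hcompl).trans <|
        hB.measure_exists_line_le (dyadicTime_mono n) δ hδ.le) 1
    _ = P (belowLine B δ n 0) := by
        rw [← prob_compl_eq_one_sub (measurableSet_belowLine hB.measurable δ n 0).compl,
          compl_compl]

lemma le_measure_belowLine (hB : IsBrownianMotion P B) (hδ : 0 < δ) (hδ' : δ ≤ 1 / 4) (n m : ℕ) :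
    ENNReal.ofReal (δ ^ 2) * ENNReal.ofReal (2 / 5 * δ ^ 3) ^ m ≤ P (belowLine B δ n m) := by
  induction m generalizing P B with
  | zero => simpa using hB.le_measure_belowLine_zero hδ hδ' n
  | succ m ih =>
    have hdip := hB.le_measure_dip hδ hδ' n
    have hdip₀ : P (dip B δ n) ≠ 0 :=
      ((ENNReal.ofReal_pos.2 (by positivity)).trans_le hdip).ne'
    have := hB.isProbabilityMeasure
    have hrestart := ih (hB.restart_cond zero_le_one (measurableSet_dip B δ n) hdip₀)
    calc ENNReal.ofReal (δ ^ 2) * ENNReal.ofReal (2 / 5 * δ ^ 3) ^ (m + 1)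
        = ENNReal.ofReal (δ ^ 2) * ENNReal.ofReal (2 / 5 * δ ^ 3) ^ m
          * ENNReal.ofReal (2 / 5 * δ ^ 3) := by rw [pow_succ _ m, mul_assoc]
      _ ≤ P[|dip B δ n] (belowLine (restart B 1) δ n m) * P (dip B δ n) :=
          mul_le_mul' hrestart hdip
      _ = P (dip B δ n ∩ belowLine (restart B 1) δ n m) :=
          cond_mul_eq_inter (hB.natSigma_le 1 _ (measurableSet_dip B δ n)) _ P
      _ ≤ P (belowLine B δ n (m + 1)) :=
          measure_mono (dip_inter_belowLine_restart_subset B hδ.le n m)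

end IsBrownianMotion

lemma Xproc_le_of_forall_mem_belowLine {B : ℝ → Ω → ℝ} {δ : ℝ} (hδ : 0 ≤ δ) {m : ℕ} {ω : Ω}
    (hcont : ContinuousOn (fun t ↦ B t ω) (Ici 0)) (hω : ∀ n, ω ∈ belowLine B δ n m) {j : ℕ}
    (hj : j < m) : Xproc B (j + 1) ω ≤ (4 * m + 2) * δ := by
  have hline (u : ℝ) (hu : 0 ≤ u) : B u ω ≤ δ + δ * u :=
    le_of_forall_dyadicTime (f := fun t ↦ B t ω) (g := fun t ↦ δ + δ * t) hcont (by fun_prop)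
      (fun n k ↦ ((hω n).1 k).le) hu
  have hK : Kproc B (j + 1) ω ≤ δ + δ * (j + 1) :=
    concaveMajorant_le (concaveOn_line δ δ) hline (by positivity)
  have hlow : -2 * δ * (j + 1) ≤ B (j + 1) ω := (hω 0).2 j hj
  have hjm : (j : ℝ) + 1 ≤ m := mod_cast hj
  unfold Xproc
  nlinarith

lemma IsBrownianMotion.le_measure_forall_Xproc_le [MeasurableSpace Ω] {P : Measure Ω}
    {B : ℝ → Ω → ℝ} (hB : IsBrownianMotion P B) {δ : ℝ} (hδ : 0 < δ) (hδ' : δ ≤ 1 / 4) (m : ℕ) :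
    ENNReal.ofReal (δ ^ 2) * ENNReal.ofReal (2 / 5 * δ ^ 3) ^ m
      ≤ P {ω | ∀ j < m, Xproc B (j + 1) ω ≤ (4 * m + 2) * δ} := by
  have := hB.isProbabilityMeasure
  calc ENNReal.ofReal (δ ^ 2) * ENNReal.ofReal (2 / 5 * δ ^ 3) ^ m
      ≤ ⨅ n, P (belowLine B δ n m) := le_iInf fun n ↦ hB.le_measure_belowLine hδ hδ' n m
    _ = P (⋂ n, belowLine B δ n m) := ((antitone_belowLine B δ m).measure_iInter
        (fun n ↦ (measurableSet_belowLine hB.measurable δ n m).nullMeasurableSet)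
        ⟨0, measure_ne_top P _⟩).symm
    _ ≤ P {ω | ∀ j < m, Xproc B (j + 1) ω ≤ (4 * m + 2) * δ} := measure_mono_ae <|
        hB.cont.mono fun ω hcont hω j hj ↦
          Xproc_le_of_forall_mem_belowLine hδ.le hcont (mem_iInter.1 hω) hj

end LowerBound

section UpperBound

variable {Ω : Type*} [MeasurableSpace Ω] {P : Measure Ω}

namespace IsBrownianMotion

variable {B : ℝ → Ω → ℝ}

lemma measure_forall_abs_increment_le (hB : IsBrownianMotion P B) (ε : ℝ) (m : ℕ) :
    P {ω | ∀ j < m, |B (j + 1) ω - B j ω| ≤ ε} ≤ ENNReal.ofReal (2 * ε) ^ m := by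
  have := hB.isProbabilityMeasure
  induction m with
  | zero => simp
  | succ m ih =>
    set A := {ω | ∀ j < m, |B (j + 1) ω - B j ω| ≤ ε}
    set Z := fun ω ↦ B (m + 1) ω - B m ω
    have hsplit : {ω | ∀ j < m + 1, |B (j + 1) ω - B j ω| ≤ ε} = Z ⁻¹' Icc (-ε) ε ∩ A := by
      ext ω
      simp only [Nat.forall_lt_succ_right, mem_ofPred_eq, mem_inter_iff, mem_preimage, mem_Icc,
        ← abs_le, A, Z, and_comm]
    have hA : MeasurableSet[natSigma B m] A := by
      simp only [A, ofPred_forall]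
      refine .iInter fun j ↦ .iInter fun hj ↦ ?_
      have hjm : (j : ℝ) + 1 ≤ m := mod_cast hj
      have hincr := (measurable_natSigma B (by positivity) hjm).sub
        (measurable_natSigma B j.cast_nonneg (by linarith))
      simp only [abs_le]
      exact hincr measurableSet_Icc
    have hZ : HasLaw Z (gaussianReal 0 1) P := by
      simpa using hB.hasLaw_sub m.cast_nonneg (le_add_of_nonneg_right zero_le_one)
    have hindep := hB.incr_indep m (m + 1) m.cast_nonneg (by linarith)
    calc P {ω | ∀ j < m + 1, |B (j + 1) ω - B j ω| ≤ ε}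
        = P (Z ⁻¹' Icc (-ε) ε) * P A := by
          rw [hsplit, (Indep_iff _ _ _).1 hindep _ _ ⟨_, measurableSet_Icc, rfl⟩ hA]
      _ = gaussianReal 0 1 (Icc (-ε) ε) * P A := by
          congr 1
          exact hZ.measure_eq measurableSet_Icc
      _ ≤ volume (Icc (-ε) ε) * ENNReal.ofReal (2 * ε) ^ m :=
          mul_le_mul' (gaussianReal_one_le_volume 0 _) ih
      _ = ENNReal.ofReal (2 * ε) ^ (m + 1) := by
          rw [Real.volume_Icc, sub_neg_eq_add, ← two_mul, pow_succ']

lemma measure_forall_abs_le (hB : IsBrownianMotion P B) {ε : ℝ} (hε : 0 ≤ ε) (m : ℕ) :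
    P {ω | ∀ j < m, |B (j + 1) ω| ≤ ε} ≤ ENNReal.ofReal (4 * ε) ^ m := by
  have hsub : {ω | ∀ j < m, |B (j + 1) ω| ≤ ε}
      ≤ᵐ[P] {ω | ∀ j < m, |B (j + 1) ω - B j ω| ≤ 2 * ε} := by
    filter_upwards [hB.init] with ω h₀ hω j hj
    have hprev : |B j ω| ≤ ε := by
      rcases j with _ | j
      · simpa [h₀] using hε
      · simpa using hω j (by lia)
    exact (abs_sub _ _).trans (by linarith [hω j hj])
  calc P {ω | ∀ j < m, |B (j + 1) ω| ≤ ε}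
      ≤ P {ω | ∀ j < m, |B (j + 1) ω - B j ω| ≤ 2 * ε} := measure_mono_ae hsub
    _ ≤ ENNReal.ofReal (2 * (2 * ε)) ^ m := hB.measure_forall_abs_increment_le _ m
    _ = ENNReal.ofReal (4 * ε) ^ m := by ring_nf

end IsBrownianMotion

namespace IsBrownianMotionND

variable {n : ℕ} {W : ℝ → Ω → EuclideanSpace ℝ (Fin n)}

lemma measurable_norm (hW : IsBrownianMotionND P W) (t : ℝ) : Measurable fun ω ↦ ‖W t ω‖ := by
  simp_rw [EuclideanSpace.norm_eq]
  exact (Finset.measurable_sum _ fun i _ ↦ ((hW.1 i).measurable t).norm.pow_const 2).sqrt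

lemma measure_forall_norm_le (hW : IsBrownianMotionND P W) {ε : ℝ} (hε : 0 ≤ ε) (m : ℕ) :
    P {ω | ∀ j < m, ‖W (j + 1) ω‖ ≤ ε} ≤ (ENNReal.ofReal (4 * ε) ^ m) ^ n := by
  set A : Fin n → Set Ω := fun i ↦ {ω | ∀ j < m, |W (j + 1) ω i| ≤ ε}
  have hA (i : Fin n) : MeasurableSet[procSigma fun t ω ↦ W t ω i] (A i) := by
    simp only [A, ofPred_forall, abs_le]
    exact .iInter fun j ↦ .iInter fun _ ↦
      measurable_procSigma (fun t ω ↦ W t ω i) (by positivity) measurableSet_Icc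
  calc P {ω | ∀ j < m, ‖W (j + 1) ω‖ ≤ ε}
      ≤ P (⋂ i, A i) := measure_mono fun ω hω ↦ mem_iInter.2 fun i j hj ↦
        (PiLp.norm_apply_le (W (j + 1) ω) i).trans (hω j hj)
    _ = ∏ i, P (A i) := hW.2.meas_iInter hA
    _ ≤ ∏ _ : Fin n, ENNReal.ofReal (4 * ε) ^ m :=
        Finset.prod_le_prod' fun i _ ↦ (hW.1 i).measure_forall_abs_le hε m
    _ = (ENNReal.ofReal (4 * ε) ^ m) ^ n := by simp

end IsBrownianMotionND

end UpperBound

section Comparison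

variable {Ω Ω' : Type*} [MeasurableSpace Ω] [MeasurableSpace Ω'] {P : Measure Ω}
  {B : ℝ → Ω → ℝ} {P' : Measure Ω'} {n : ℕ} {W : ℝ → Ω' → EuclideanSpace ℝ (Fin n)}

lemma exists_measure_forall_norm_le_lt (hn : 4 ≤ n) (hB : IsBrownianMotion P B)
    (hW : IsBrownianMotionND P' W) :
    ∃ ε, P' {ω | ∀ j < (3 : ℕ), ‖W (j + 1) ω‖ ≤ ε}
      < P {ω | ∀ j < (3 : ℕ), Xproc B (j + 1) ω ≤ ε} := by
  -- Any `δ < (2 / 5) ^ 3 / 56 ^ 12` works.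
  set δ : ℝ := 1 / 10 ^ 23 with hδ
  refine ⟨(4 * (3 : ℕ) + 2) * δ, ?_⟩
  have hbase : ENNReal.ofReal (4 * ((4 * (3 : ℕ) + 2) * δ)) ^ 3 ≤ 1 :=
    pow_le_one₀ zero_le (ENNReal.ofReal_le_one.2 (by norm_num [hδ]))
  calc P' {ω | ∀ j < (3 : ℕ), ‖W (j + 1) ω‖ ≤ (4 * (3 : ℕ) + 2) * δ}
      ≤ (ENNReal.ofReal (4 * ((4 * (3 : ℕ) + 2) * δ)) ^ 3) ^ n :=
        hW.measure_forall_norm_le (by positivity) 3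
    _ ≤ (ENNReal.ofReal (4 * ((4 * (3 : ℕ) + 2) * δ)) ^ 3) ^ 4 :=
        pow_le_pow_right_of_le_one' hbase hn
    _ < ENNReal.ofReal (δ ^ 2) * ENNReal.ofReal (2 / 5 * δ ^ 3) ^ 3 := by
        rw [← ENNReal.ofReal_pow (by positivity), ← ENNReal.ofReal_pow (by positivity),
          ← ENNReal.ofReal_pow (by positivity), ← ENNReal.ofReal_mul (by positivity),
          ENNReal.ofReal_lt_ofReal_iff (by positivity)]
        norm_num [hδ]
    _ ≤ P {ω | ∀ j < (3 : ℕ), Xproc B (j + 1) ω ≤ (4 * (3 : ℕ) + 2) * δ} :=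
        hB.le_measure_forall_Xproc_le (by positivity) (by norm_num [hδ]) 3

theorem two_K_sub_B_not_BES5_general (hn : 4 ≤ n) (hB : IsBrownianMotion P B)
    (hW : IsBrownianMotionND P' W) :
    ∃ (m : ℕ) (ts : Fin m → ℝ), StrictMono ts ∧ (∀ i, 0 < ts i) ∧
      P.map (fun ω (i : Fin m) => Xproc B (ts i) ω)
        ≠ P'.map (fun ω (i : Fin m) => ‖W (ts i) ω‖) := by
  obtain ⟨ε, hε⟩ := exists_measure_forall_norm_le_lt hn hB hW
  refine ⟨3, fun i ↦ i + 1, fun i j hij ↦ by simpa using hij, fun i ↦ by positivity, fun h ↦ ?_⟩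
  have := (hW.1 ⟨0, by lia⟩).isProbabilityMeasure
  have hnorm : Measurable fun ω (i : Fin 3) ↦ ‖W (i + 1) ω‖ :=
    measurable_pi_lambda _ fun i ↦ hW.measurable_norm _
  have heq := measure_preimage_eq_of_map_eq hnorm.aemeasurable h
    (measurableSet_Iic (a := fun _ ↦ ε))
  simp only [preimage, mem_Iic, Pi.le_def, Fin.forall_iff] at heq
  exact hε.ne' heq

end Comparison

end

/-- `X = 2K - B` does not have the law of the BES(5) process: some
finite-dimensional distribution of `X` differs from that of the radial part of a standard
5-dimensional Brownian motion started at the origin. -/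
theorem two_K_sub_B_not_BES5 {Ω Ω' : Type*} [MeasurableSpace Ω] [MeasurableSpace Ω']
    (P : Measure Ω) [IsProbabilityMeasure P] (B : ℝ → Ω → ℝ) (hB : IsBrownianMotion P B)
    (P' : Measure Ω') [IsProbabilityMeasure P']
    (W : ℝ → Ω' → EuclideanSpace ℝ (Fin 5)) (hW : IsBrownianMotionND P' W) :
    ∃ (m : ℕ) (ts : Fin m → ℝ), StrictMono ts ∧ (∀ i, 0 < ts i) ∧
      P.map (fun ω (i : Fin m) => Xproc B (ts i) ω)
        ≠ P'.map (fun ω (i : Fin m) => ‖W (ts i) ω‖) :=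
  two_K_sub_B_not_BES5_general (by norm_num) hB hW
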